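/- Let X ∈ ℂ^{d₁×p}, Y ∈ ℂ^{d₂×p}, Z ∈ ℂ^{d₃×p} be matrices whose columns give a CP decomposition of the third-order tensor 𝒳 ∈ ℂ^{d₁×d₂×d₃}, i.e. 𝒳(i,j,k) = Σ_{r=1}^{p} X(i,r)·Y(j,r)·Z(k,r) for all i,j,k. Suppose Kruskal's condition k_X + k_Y + k_Z ≥ 2p + 2 holds, where k_M denotes the k-rank of M. If X̂ ∈ ℂ^{d₁×p}, Ŷ ∈ ℂ^{d₂×p}, Ẑ ∈ ℂ^{d₃×p} also satisfy 𝒳(i,j,k) = Σ_{r=1}^{p} X̂(i,r)·Ŷ(j,r)·Ẑ(k,r) for all i,j,k, then there exist a permutation σ of {1,…,p} and nonzero complex scalars λ_r, μ_r, ν_r with λ_r·μ_r·ν_r = 1 for each r, such that X̂(·,r) = λ_r·X(·,σ(r)), Ŷ(·,r) = μ_r·Y(·,σ(r)), and Ẑ(·,r) = ν_r·Z(·,σ(r)) for all r. -/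

import Mathlib

/-- The k-rank of a matrix `M`: the largest `k` such that every subset of `k`
columns of `M` is linearly independent. -/
noncomputable def kRank {d p : ℕ} (M : Matrix (Fin d) (Fin p) ℂ) : ℕ :=
  sSup {k | k ≤ p ∧ ∀ s : Finset (Fin p), s.card = k →
    LinearIndependent ℂ (fun j : s => fun i : Fin d => M i j)}

/-!
Following Lovitz and Petrov, move both decompositions to one side and consider a minimal nonempty
subsum that vanishes, with index set `C`. The tensors `x a ⊗ y a` cannot be separated over `C` into
two parts with independent spans, since each part of the sum would then vanish on its own. Growing a
subset of `C` from a single term by minimal linear dependences shows that such an inseparable family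
satisfies `rank x + rank y ≤ rank (x ⊗ y) + 1`, while the vanishing of the sum of `(x ⊗ y) ⊗ z`
gives `rank (x ⊗ y) + rank z ≤ |C|`. Hence `rank x + rank y + rank z ≤ |C| + 1`. If at least half of
`C`, and at least two terms, come from the decomposition satisfying Kruskal's condition, this
contradicts the condition. As long as the given decomposition has at least as many terms as the
other, some minimal subsum takes at least half of its terms from it, and therefore consists of one
term on each side; cancel these two terms and repeat.
-/

open Module Submodule TensorProduct

section FinrankImage

variable {K ι M : Type*} [DivisionRing K] [AddCommGroup M] [Module K M]

instance finiteDimensional_span_image (x : ι → M) (S : Finset ι) :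
    FiniteDimensional K (span K (x '' S)) :=
  FiniteDimensional.span_of_finite K (S.finite_toSet.image x)

lemma finrank_image_mono (x : ι → M) {S T : Finset ι} (h : S ⊆ T) :
    Set.finrank K (x '' S) ≤ Set.finrank K (x '' T) :=
  finrank_mono (span_mono (Set.image_mono h))

lemma finrank_image_le_card (x : ι → M) (S : Finset ι) : Set.finrank K (x '' S) ≤ S.card := by
  classical
  rw [← Finset.coe_image]
  exact (finrank_span_finset_le_card _).trans Finset.card_image_le

lemma finrank_image_eq_card {x : ι → M} {S : Finset ι} (h : LinearIndepOn K x (S : Set ι)) :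
    Set.finrank K (x '' S) = S.card := by
  rw [Set.image_eq_range, Set.finrank]
  exact (finrank_span_eq_card h).trans (Fintype.card_coe S)

lemma finrank_image_toLeft_le {ι' : Type*} (x : ι → M) (x' : ι' → M) (D : Finset (ι ⊕ ι')) :
    Set.finrank K (x '' D.toLeft) ≤ Set.finrank K (Sum.elim x x' '' D) := by
  refine finrank_mono (span_mono ?_)
  rintro _ ⟨a, ha, rfl⟩
  exact ⟨Sum.inl a, by simpa using ha, rfl⟩

variable [DecidableEq ι]

lemma finrank_image_union_add_finrank_inf (x : ι → M) (S T : Finset ι) :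
    Set.finrank K (x '' (S ∪ T : Finset ι)) + finrank K ↥(span K (x '' S) ⊓ span K (x '' T)) =
      Set.finrank K (x '' S) + Set.finrank K (x '' T) := by
  rw [Set.finrank, Finset.coe_union, Set.image_union, span_union]
  exact finrank_sup_add_finrank_inf_eq _ _

lemma finrank_image_union_le_add_card (x : ι → M) (S T : Finset ι) :
    Set.finrank K (x '' (S ∪ T : Finset ι)) ≤ Set.finrank K (x '' S) + T.card := by
  have := finrank_image_union_add_finrank_inf (K := K) x S T
  have := finrank_image_le_card (K := K) x T
  omega

lemma finrank_image_union_of_disjoint {x : ι → M} {S T : Finset ι}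
    (h : Disjoint (span K (x '' S)) (span K (x '' T))) :
    Set.finrank K (x '' (S ∪ T : Finset ι)) = Set.finrank K (x '' S) + Set.finrank K (x '' T) := by
  rw [← finrank_image_union_add_finrank_inf, h.eq_bot, finrank_bot, add_zero]

lemma finrank_image_union_lt_of_not_disjoint {x : ι → M} {S T : Finset ι}
    (h : ¬Disjoint (span K (x '' S)) (span K (x '' T))) :
    Set.finrank K (x '' (S ∪ T : Finset ι)) < Set.finrank K (x '' S) + Set.finrank K (x '' T) := by
  rw [← finrank_image_union_add_finrank_inf, Nat.lt_add_right_iff_pos, pos_iff_ne_zero, ne_eq,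
    finrank_eq_zero, ← disjoint_iff]
  exact h

end FinrankImage

section MinimalDependence

variable {K ι M : Type*} [DivisionRing K] [AddCommGroup M] [Module K M] {u : ι → M}
  {U : Submodule K M} {D : Finset ι}

lemma nonempty_of_not_disjoint_span (h : ¬Disjoint U (span K (u '' D))) : D.Nonempty := by
  rw [Finset.nonempty_iff_ne_empty]
  rintro rfl
  simp at h

lemma exists_sum_smul_mem_of_minimal_not_disjoint
    (hD : Minimal (fun T : Finset ι ↦ ¬Disjoint U (span K (u '' T))) D) :
    ∃ c : ι → K, (∀ a ∈ D, c a ≠ 0) ∧ ∑ a ∈ D, c a • u a ∈ U := by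
  classical
  obtain ⟨w, hwU, hwD, hw⟩ : ∃ w ∈ U, w ∈ span K (u '' D) ∧ w ≠ 0 := by
    simpa [disjoint_def] using hD.prop
  obtain ⟨c, rfl⟩ := (mem_span_image_finset_iff_exists_fun' K).1 hwD
  refine ⟨c, fun a ha hca ↦ hD.not_prop_of_lt (Finset.erase_ssubset ha) fun hdisj ↦ hw ?_, hwU⟩
  refine disjoint_def.1 hdisj _ hwU ?_
  rw [← Finset.sum_erase D (by rw [hca, zero_smul])]
  exact sum_mem fun b hb ↦ smul_mem _ _ (subset_span ⟨b, hb, rfl⟩)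

lemma linearIndepOn_of_minimal_not_disjoint
    (hD : Minimal (fun T : Finset ι ↦ ¬Disjoint U (span K (u '' T))) D) :
    LinearIndepOn K u (D : Set ι) := by
  classical
  rw [linearIndepOn_iff_notMem_span]
  intro a ha hmem
  refine hD.not_prop_of_lt (Finset.erase_ssubset ha) ?_
  have hspan : span K (u '' (D.erase a : Finset ι)) = span K (u '' D) := by
    rw [← Finset.insert_erase ha, Finset.coe_insert, Set.image_insert_eq,
      Finset.insert_erase ha, Finset.coe_erase, span_insert_eq_span hmem]
  rw [hspan]
  exact hD.prop

lemma finrank_image_add_card_le_of_minimal_not_disjoint [DecidableEq ι] {S : Finset ι}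
    (hD : Minimal (fun T : Finset ι ↦ ¬Disjoint (span K (u '' S)) (span K (u '' T))) D) :
    Set.finrank K (u '' S) + D.card ≤ Set.finrank K (u '' (S ∪ D : Finset ι)) + 1 := by
  obtain ⟨a, ha⟩ := nonempty_of_not_disjoint_span hD.prop
  have hdisj : Disjoint (span K (u '' S)) (span K (u '' (D.erase a : Finset ι))) :=
    not_not.1 (hD.not_prop_of_lt (Finset.erase_ssubset ha))
  have hindep : LinearIndepOn K u (D.erase a : Finset ι) :=
    (linearIndepOn_of_minimal_not_disjoint hD).mono (by simp)
  calc Set.finrank K (u '' S) + D.card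
      = Set.finrank K (u '' (S ∪ D.erase a : Finset ι)) + 1 := by
        rw [finrank_image_union_of_disjoint hdisj, finrank_image_eq_card hindep, add_assoc,
          Finset.card_erase_add_one ha]
    _ ≤ Set.finrank K (u '' (S ∪ D : Finset ι)) + 1 :=
        Nat.add_le_add_right
          (finrank_image_mono u (Finset.union_subset_union_right (Finset.erase_subset a D))) 1

end MinimalDependence

section Contraction

variable {K ι E F : Type*} [CommSemiring K] [AddCommMonoid E] [Module K E] [AddCommMonoid F]
  [Module K F]

/-- The contraction `φ ⊗ id` of the left tensor factor against a functional `φ`. It turns relations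
between pure tensors into relations between their right factors. -/
def contractLeftFactor (φ : Dual K E) : E ⊗[K] F →ₗ[K] F :=
  TensorProduct.lid K F ∘ₗ φ.rTensor F

lemma contractLeftFactor_tmul (φ : Dual K E) (x : E) (y : F) :
    contractLeftFactor φ (x ⊗ₜ[K] y) = φ x • y := by
  simp [contractLeftFactor]

lemma sum_smul_mem_span_of_sum_tmul_mem_span {x : ι → E} {y : ι → F} {c : ι → K} {S : Set ι}
    {D : Finset ι}
    (h : ∑ a ∈ D, c a • x a ⊗ₜ[K] y a ∈ span K ((fun a ↦ x a ⊗ₜ[K] y a) '' S)) (φ : Dual K E) :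
    ∑ a ∈ D, (c a * φ (x a)) • y a ∈ span K (y '' S) := by
  have hle : span K ((fun a ↦ x a ⊗ₜ[K] y a) '' S) ≤
      (span K (y '' S)).comap (contractLeftFactor φ) := by
    rw [span_le]
    rintro _ ⟨a, ha, rfl⟩
    simpa [contractLeftFactor_tmul] using
      smul_mem _ (φ (x a)) (subset_span (Set.mem_image_of_mem y ha))
  simpa [contractLeftFactor_tmul, mul_smul] using hle h

end Contraction

section Tensor

variable {K ι E F : Type*} [Field K] [AddCommGroup E] [Module K E] [AddCommGroup F] [Module K F]

lemma disjoint_span_image_tmul {x : ι → E} (y : ι → F) {A B : Set ι}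
    (h : Disjoint (span K (x '' A)) (span K (x '' B))) :
    Disjoint (span K ((fun a ↦ x a ⊗ₜ[K] y a) '' A)) (span K ((fun a ↦ x a ⊗ₜ[K] y a) '' B)) := by
  obtain ⟨U, hAU, hU⟩ := h.exists_isCompl
  let π : E →ₗ[K] E := U.projection _ hU
  have hA : Set.EqOn (π.rTensor F) (LinearMap.id : E ⊗[K] F →ₗ[K] E ⊗[K] F)
      ((fun a ↦ x a ⊗ₜ[K] y a) '' A) := by
    rintro _ ⟨a, ha, rfl⟩
    have hxa : π (x a) = x a :=
      projection_apply_of_mem_left hU (hAU (subset_span (Set.mem_image_of_mem x ha)))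
    simp [hxa]
  have hB : Set.EqOn (π.rTensor F) (0 : E ⊗[K] F →ₗ[K] E ⊗[K] F)
      ((fun a ↦ x a ⊗ₜ[K] y a) '' B) := by
    rintro _ ⟨b, hb, rfl⟩
    have hxb : π (x b) = 0 :=
      projection_apply_of_mem_right hU (subset_span (Set.mem_image_of_mem x hb))
    simp [hxb]
  rw [disjoint_def]
  intro t htA htB
  exact (LinearMap.eqOn_span hA htA).symm.trans (LinearMap.eqOn_span hB htB)

lemma exists_dual_of_linearIndepOn {x : ι → E} {B : Set ι} (hB : LinearIndepOn K x B) {b : ι}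
    (hb : b ∈ B) :
    ∃ φ : Dual K E, φ (x b) ≠ 0 ∧ ∀ a ∈ B, a ≠ b → φ (x a) = 0 := by
  obtain ⟨φ, hφb, hφ⟩ := exists_le_ker_of_notMem (linearIndepOn_iff_notMem_span.1 hB b hb)
  exact ⟨φ, hφb, fun a ha hab ↦ hφ (subset_span ⟨a, ⟨ha, hab⟩, rfl⟩)⟩

variable [DecidableEq ι]

lemma span_image_union_le_of_linearIndepOn {x : ι → E} {y : ι → F} {c : ι → K} {S B D : Finset ι}
    (hc : ∀ a ∈ D, c a ≠ 0)
    (h : ∑ a ∈ D, c a • x a ⊗ₜ[K] y a ∈ span K ((fun a ↦ x a ⊗ₜ[K] y a) '' S))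
    (hBD : B ⊆ D) (hB : LinearIndepOn K x (B : Set ι)) :
    span K (y '' (S ∪ D : Finset ι)) ≤ span K (y '' (S ∪ D \ B : Finset ι)) := by
  rw [span_le]
  rintro _ ⟨b, hb, rfl⟩
  by_cases hbB : b ∈ B
  · -- Contracting with the functional dual to `x b` in `B` solves the relation for `y b`.
    obtain ⟨φ, hφb, hφ⟩ := exists_dual_of_linearIndepOn hB hbB
    have hSD : span K (y '' S) ≤ span K (y '' (S ∪ D \ B : Finset ι)) :=
      span_mono (Set.image_mono (by simp))
    have hsum := hSD (sum_smul_mem_span_of_sum_tmul_mem_span h φ)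
    have hB_sum : ∑ a ∈ B, (c a * φ (x a)) • y a = (c b * φ (x b)) • y b :=
      Finset.sum_eq_single_of_mem b hbB fun a ha hab ↦ by rw [hφ a ha hab, mul_zero, zero_smul]
    rw [← Finset.sum_sdiff hBD, hB_sum, add_mem_cancel_left] at hsum
    · exact (smul_mem_iff _ (mul_ne_zero (hc b (hBD hbB)) hφb)).1 hsum
    · exact sum_mem fun a ha ↦ smul_mem _ _ (subset_span ⟨a, Finset.mem_union_right S ha, rfl⟩)
  · exact subset_span ⟨b, by simp_all, rfl⟩

lemma finrank_image_add_finrank_image_union_le {x : ι → E} {y : ι → F} {c : ι → K} {S D : Finset ι}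
    (hc : ∀ a ∈ D, c a ≠ 0)
    (h : ∑ a ∈ D, c a • x a ⊗ₜ[K] y a ∈ span K ((fun a ↦ x a ⊗ₜ[K] y a) '' S)) :
    Set.finrank K (x '' D) + Set.finrank K (y '' (S ∪ D : Finset ι)) ≤
      Set.finrank K (y '' S) + D.card := by
  obtain ⟨B, hBD, -, hspan, hB⟩ :=
    exists_linearIndepOn_extension (linearIndepOn_empty K x) (Set.empty_subset (D : Set ι))
  lift B to Finset ι using D.finite_toSet.subset hBD
  rw [Finset.coe_subset] at hBD
  calc Set.finrank K (x '' D) + Set.finrank K (y '' (S ∪ D : Finset ι))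
      ≤ Set.finrank K (x '' B) + Set.finrank K (y '' (S ∪ D \ B : Finset ι)) :=
        add_le_add (finrank_mono (span_le.2 hspan))
          (finrank_mono (span_image_union_le_of_linearIndepOn hc h hBD hB))
    _ ≤ B.card + (Set.finrank K (y '' S) + (D \ B).card) :=
        add_le_add (finrank_image_le_card x B) (finrank_image_union_le_add_card y S _)
    _ = Set.finrank K (y '' S) + D.card := by
        rw [← Finset.card_sdiff_add_card_eq_card hBD]; ring

end Tensor

section Splitting

/-- The family `u` splits on `C` when `C` has a nonempty proper subset whose members span a subspace
independent of the span of the remaining members (Lovitz and Petrov). In matroid language, `u`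
restricted to `C` is disconnected. -/
def SplitsOn (K : Type*) {ι M : Type*} [Semiring K] [AddCommMonoid M] [Module K M]
    (u : ι → M) (C : Finset ι) : Prop :=
  ∃ S ⊂ C, S.Nonempty ∧ Disjoint (span K (u '' S)) (span K (u '' (C \ S)))

variable {K ι E F : Type*} [Field K] [AddCommGroup E] [Module K E] [AddCommGroup F] [Module K F]
  {x : ι → E} {y : ι → F}

lemma exists_union_finrank_image_le [DecidableEq ι] {S T : Finset ι}
    (hST : ¬Disjoint (span K ((fun a ↦ x a ⊗ₜ[K] y a) '' S))
      (span K ((fun a ↦ x a ⊗ₜ[K] y a) '' T)))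
    (hS : Set.finrank K (x '' S) + Set.finrank K (y '' S) ≤
      Set.finrank K ((fun a ↦ x a ⊗ₜ[K] y a) '' S) + 1) :
    ∃ D ⊆ T, D.Nonempty ∧
      Set.finrank K (x '' (S ∪ D : Finset ι)) + Set.finrank K (y '' (S ∪ D : Finset ι)) ≤
        Set.finrank K ((fun a ↦ x a ⊗ₜ[K] y a) '' (S ∪ D : Finset ι)) + 1 := by
  obtain ⟨D, hDT, hD⟩ := exists_minimal_le_of_wellFoundedLT
    (fun T : Finset ι ↦ ¬Disjoint (span K ((fun a ↦ x a ⊗ₜ[K] y a) '' S))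
      (span K ((fun a ↦ x a ⊗ₜ[K] y a) '' T))) T hST
  obtain ⟨c, hc, hsum⟩ := exists_sum_smul_mem_of_minimal_not_disjoint hD
  have hxy := finrank_image_add_finrank_image_union_le hc hsum
  have hx := finrank_image_union_lt_of_not_disjoint fun h ↦ hD.prop (disjoint_span_image_tmul y h)
  have hu := finrank_image_add_card_le_of_minimal_not_disjoint hD
  exact ⟨D, hDT, nonempty_of_not_disjoint_span hD.prop, by omega⟩

theorem finrank_image_add_finrank_image_le_of_not_splitsOn {C : Finset ι}
    (hC : ¬SplitsOn K (fun a ↦ x a ⊗ₜ[K] y a) C) {a : ι} (ha : a ∈ C) (hne : x a ⊗ₜ[K] y a ≠ 0) :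
    Set.finrank K (x '' C) + Set.finrank K (y '' C) ≤
      Set.finrank K ((fun a ↦ x a ⊗ₜ[K] y a) '' C) + 1 := by
  classical
  let P (S : Finset ι) : Prop := S.Nonempty ∧ Set.finrank K (x '' S) + Set.finrank K (y '' S) ≤
    Set.finrank K ((fun a ↦ x a ⊗ₜ[K] y a) '' S) + 1
  have ha_P : P {a} := by
    have hx := finrank_image_le_card (K := K) x {a}
    have hy := finrank_image_le_card (K := K) y {a}
    have hu : Set.finrank K ((fun a ↦ x a ⊗ₜ[K] y a) '' ({a} : Finset ι)) = 1 := by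
      rw [finrank_image_eq_card (by simpa using hne), Finset.card_singleton]
    rw [Finset.card_singleton] at hx hy
    exact ⟨Finset.singleton_nonempty a, by omega⟩
  obtain ⟨S, hS⟩ := (C.powerset.filter P).exists_maximal
    ⟨{a}, by simpa [ha] using ha_P⟩
  obtain ⟨hSC, hS_ne, hS_le⟩ := by simpa [P] using hS.prop
  obtain rfl | hssub := hSC.eq_or_ssubset
  · exact hS_le
  have hST : ¬Disjoint (span K ((fun a ↦ x a ⊗ₜ[K] y a) '' S))
      (span K ((fun a ↦ x a ⊗ₜ[K] y a) '' (C \ S : Finset ι))) := fun h ↦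
    hC ⟨S, hssub, hS_ne, by rwa [Finset.coe_sdiff] at h⟩
  obtain ⟨D, hD, ⟨d, hd⟩, hD_le⟩ := exists_union_finrank_image_le hST hS_le
  have hSD : S ∪ D ⊆ S := hS.le_of_ge
    (Finset.mem_filter.2 ⟨Finset.mem_powerset.2 (Finset.union_subset hSC
      (hD.trans Finset.sdiff_subset)), hS_ne.mono Finset.subset_union_left, hD_le⟩)
    Finset.subset_union_left
  exact absurd (hSD (Finset.mem_union_right S hd)) (Finset.mem_sdiff.1 (hD hd)).2

end Splitting

section ZeroSum

variable {κ M : Type*} [AddCommGroup M]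

/-- `IsZeroSum f C` says that `C` is nonempty and that `f` sums to zero over `C`. Its minimal
instances play the role of circuits, but for the coefficient vector `1` only. -/
def IsZeroSum (f : κ → M) (C : Finset κ) : Prop := C.Nonempty ∧ ∑ i ∈ C, f i = 0

lemma exists_minimal_isZeroSum_sum_nonneg {R : Type*} [AddCommGroup R] [LinearOrder R]
    [IsOrderedAddMonoid R] {f : κ → M} (w : κ → R) {C : Finset κ} (hC : IsZeroSum f C)
    (hw : 0 ≤ ∑ i ∈ C, w i) :
    ∃ D ⊆ C, Minimal (IsZeroSum f) D ∧ 0 ≤ ∑ i ∈ D, w i := by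
  classical
  induction C using Finset.strongInduction with
  | H C ih =>
    by_cases hmin : Minimal (IsZeroSum f) C
    · exact ⟨C, subset_rfl, hmin, hw⟩
    obtain ⟨D, hDC, hD⟩ : ∃ D ⊂ C, IsZeroSum f D := by
      simpa [minimal_iff_forall_lt, hC] using hmin
    suffices ∃ D ⊂ C, IsZeroSum f D ∧ 0 ≤ ∑ i ∈ D, w i by
      obtain ⟨D, hDC, hD, hwD⟩ := this
      obtain ⟨B, hBD, hB⟩ := ih D hDC hD hwD
      exact ⟨B, hBD.trans hDC.subset, hB⟩
    have hf_sdiff := Finset.sum_sdiff (f := f) hDC.subset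
    have hw_sdiff := Finset.sum_sdiff (f := w) hDC.subset
    rw [hD.2, hC.2, add_zero] at hf_sdiff
    obtain hwD | hwD := le_or_gt 0 (∑ i ∈ D, w i)
    · exact ⟨D, hDC, hD, hwD⟩
    · exact ⟨C \ D, Finset.sdiff_ssubset hDC.subset hD.1,
        ⟨Finset.sdiff_nonempty.2 hDC.not_subset, hf_sdiff⟩,
        le_of_not_gt fun h ↦ (add_neg h hwD).not_ge (hw_sdiff ▸ hw)⟩

variable {K E F G : Type*} [Field K] [AddCommGroup E] [Module K E] [AddCommGroup F] [Module K F]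
  [AddCommGroup G] [Module K G] {x : κ → E} {y : κ → F} {z : κ → G} {C : Finset κ}

lemma not_splitsOn_of_minimal_isZeroSum
    (hC : Minimal (IsZeroSum fun a ↦ x a ⊗ₜ[K] y a) C) : ¬SplitsOn K x C := by
  classical
  rintro ⟨S, hSC, hS, hdisj⟩
  have hdisj_tmul := disjoint_span_image_tmul y hdisj
  -- The partial sums over `S` and `C \ S` cancel and lie in independent spans, so both vanish.
  have hsum := Finset.sum_sdiff (f := fun a ↦ x a ⊗ₜ[K] y a) hSC.subset
  rw [hC.prop.2, add_eq_zero_iff_neg_eq] at hsum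
  refine hC.not_prop_of_lt hSC ⟨hS, disjoint_def.1 hdisj_tmul _ ?_ ?_⟩
  · exact sum_mem fun a ha ↦ subset_span ⟨a, ha, rfl⟩
  · rw [← hsum]
    exact neg_mem (sum_mem fun a ha ↦ subset_span ⟨a, by simpa using ha, rfl⟩)

theorem finrank_image_add_le_card_of_minimal_isZeroSum
    (hC : Minimal (IsZeroSum fun a ↦ x a ⊗ₜ[K] y a ⊗ₜ[K] z a) C) {a : κ} (ha : a ∈ C)
    (hne : x a ⊗ₜ[K] y a ≠ 0) :
    Set.finrank K (x '' C) + Set.finrank K (y '' C) + Set.finrank K (z '' C) ≤ C.card + 1 := by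
  classical
  have hsum : ∑ a ∈ C, (1 : κ → K) a • (x a ⊗ₜ[K] y a) ⊗ₜ[K] z a ∈
      span K ((fun a ↦ x a ⊗ₜ[K] y a ⊗ₜ[K] z a) '' (∅ : Finset κ)) := by
    simpa using hC.prop.2
  have hz := finrank_image_add_finrank_image_union_le (by simp) hsum
  rw [Finset.empty_union, Finset.coe_empty, Set.image_empty, Set.finrank_empty, zero_add] at hz
  have hxy := finrank_image_add_finrank_image_le_of_not_splitsOn
    (not_splitsOn_of_minimal_isZeroSum hC) ha hne
  omega

end ZeroSum

section Matching

lemma exists_equiv_of_map_univ_eq {ι ι' N : Type*} [Fintype ι] [Fintype ι'] {f : ι → N}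
    {g : ι' → N} (h : Finset.univ.val.map g = Finset.univ.val.map f) :
    ∃ σ : ι' ≃ ι, ∀ b, f (σ b) = g b := by
  classical
  have hfiber (n : N) : Nonempty ({b // g b = n} ≃ {a // f a = n}) := by
    rw [← Fintype.card_eq, Fintype.card_subtype, Fintype.card_subtype]
    simpa [Multiset.count_map, eq_comm, Finset.card_def] using congrArg (Multiset.count n) h
  exact ⟨Equiv.ofFiberEquiv fun n ↦ (hfiber n).some, Equiv.ofFiberEquiv_map _⟩

lemma map_val_eq_of_forall_exists_eq {ι ι' N : Type*} [AddCommGroup N] {f : ι → N} {g : ι' → N}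
    (h : ∀ (S : Finset ι) (S' : Finset ι'), S.Nonempty → S'.card ≤ S.card →
      ∑ b ∈ S', g b = ∑ a ∈ S, f a → ∃ a ∈ S, ∃ b ∈ S', g b = f a)
    {S : Finset ι} {S' : Finset ι'} (hcard : S'.card ≤ S.card)
    (hsum : ∑ b ∈ S', g b = ∑ a ∈ S, f a) : S'.val.map g = S.val.map f := by
  classical
  induction S using Finset.strongInduction generalizing S' with
  | H S ih =>
    obtain rfl | hS := S.eq_empty_or_nonempty
    · simp_all
    obtain ⟨a, ha, b, hb, hab⟩ := h S S' hS hcard hsum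
    have hS_erase : (S'.val.erase b).map g = (S.val.erase a).map f := by
      refine ih (S.erase a) (Finset.erase_ssubset ha) (S' := S'.erase b) ?_ ?_
      · rw [Finset.card_erase_of_mem ha, Finset.card_erase_of_mem hb]
        omega
      · rw [Finset.sum_erase_eq_sub ha, Finset.sum_erase_eq_sub hb, hsum, hab]
    rw [← Multiset.cons_erase ha, ← Multiset.cons_erase hb, Multiset.map_cons, Multiset.map_cons,
      hab]
    exact congrArg _ hS_erase

variable {K ι ι' E F G : Type*} [Field K] [AddCommGroup E] [Module K E] [AddCommGroup F]
  [Module K F] [AddCommGroup G] [Module K G] {x : ι → E} {y : ι → F} {z : ι → G}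
  {x' : ι' → E} {y' : ι' → F} {z' : ι' → G}

lemma card_toLeft_le_one_of_minimal_isZeroSum (hne : ∀ a, x a ⊗ₜ[K] y a ≠ 0)
    (hrank : ∀ Q : Finset ι, 2 ≤ Q.card → 2 * Q.card + 2 ≤
      Set.finrank K (x '' Q) + Set.finrank K (y '' Q) + Set.finrank K (z '' Q))
    {D : Finset (ι ⊕ ι')} (hcard : D.toRight.card ≤ D.toLeft.card)
    (hD : Minimal (IsZeroSum fun a ↦
      Sum.elim x x' a ⊗ₜ[K] Sum.elim y y' a ⊗ₜ[K] Sum.elim z z' a) D) :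
    D.toLeft.card ≤ 1 := by
  by_contra! htwo
  obtain ⟨a, ha⟩ := Finset.card_pos.1 (Nat.zero_lt_of_lt htwo)
  have hD_le := finrank_image_add_le_card_of_minimal_isZeroSum hD (Finset.mem_toLeft.1 ha) (hne a)
  have hx := finrank_image_toLeft_le (K := K) x x' D
  have hy := finrank_image_toLeft_le (K := K) y y' D
  have hz := finrank_image_toLeft_le (K := K) z z' D
  have hQ := hrank D.toLeft htwo
  have := D.card_toLeft_add_card_toRight
  omega

lemma exists_tmul_eq_of_sum_tmul_eq (hne : ∀ a, x a ⊗ₜ[K] y a ⊗ₜ[K] z a ≠ 0)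
    (hrank : ∀ Q : Finset ι, 2 ≤ Q.card → 2 * Q.card + 2 ≤
      Set.finrank K (x '' Q) + Set.finrank K (y '' Q) + Set.finrank K (z '' Q))
    {S : Finset ι} {S' : Finset ι'} (hS : S.Nonempty) (hcard : S'.card ≤ S.card)
    (hsum : ∑ b ∈ S', x' b ⊗ₜ[K] y' b ⊗ₜ[K] z' b = ∑ a ∈ S, x a ⊗ₜ[K] y a ⊗ₜ[K] z a) :
    ∃ a ∈ S, ∃ b ∈ S', x' b ⊗ₜ[K] y' b ⊗ₜ[K] z' b = x a ⊗ₜ[K] y a ⊗ₜ[K] z a := by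
  let f (a : ι ⊕ ι') : E ⊗[K] F ⊗[K] G :=
    Sum.elim x x' a ⊗ₜ[K] Sum.elim y y' a ⊗ₜ[K] Sum.elim z (-z') a
  have hf (D : Finset (ι ⊕ ι')) : ∑ a ∈ D, f a = ∑ a ∈ D.toLeft, x a ⊗ₜ[K] y a ⊗ₜ[K] z a -
      ∑ b ∈ D.toRight, x' b ⊗ₜ[K] y' b ⊗ₜ[K] z' b := by
    simp [f, Finset.sum_sum_eq_sum_toLeft_add_sum_toRight, tmul_neg, sub_eq_add_neg]
  have hC : IsZeroSum f (S.disjSum S') :=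
    ⟨by simp [Finset.nonempty_iff_ne_empty, hS.ne_empty], by simp [hf, hsum]⟩
  obtain ⟨D, hDC, hD, hDw⟩ := exists_minimal_isZeroSum_sum_nonneg
    (Sum.elim 1 (-1) : ι ⊕ ι' → ℤ) hC (by simpa using hcard)
  have hD_card : D.toRight.card ≤ D.toLeft.card := by
    simpa [Finset.sum_sum_eq_sum_toLeft_add_sum_toRight] using hDw
  have hD_one := card_toLeft_le_one_of_minimal_isZeroSum
    (fun a h ↦ hne a (by rw [h, zero_tmul])) hrank hD_card hD
  have hD_pos : 0 < D.card := hD.prop.1.card_pos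
  have hD_sum := D.card_toLeft_add_card_toRight
  obtain ⟨a, ha⟩ : ∃ a, D.toLeft = {a} := Finset.card_eq_one.1 (by omega)
  have hfD := hf D
  rw [hD.prop.2, ha, Finset.sum_singleton, eq_comm, sub_eq_zero] at hfD
  obtain ⟨b, hb⟩ : ∃ b, D.toRight = {b} := by
    refine Finset.card_eq_one.1 (le_antisymm (hD_card.trans hD_one) (Finset.card_pos.2 ?_))
    exact Finset.nonempty_of_sum_ne_zero (hfD ▸ hne a)
  rw [hb, Finset.sum_singleton] at hfD
  refine ⟨a, ?_, b, ?_, hfD.symm⟩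
  · simpa using hDC (Finset.mem_toLeft.1 (ha ▸ Finset.mem_singleton_self a))
  · simpa using hDC (Finset.mem_toRight.1 (hb ▸ Finset.mem_singleton_self b))

end Matching

section Scalars

variable {K E F G : Type*} [Field K] [AddCommGroup E] [Module K E] [AddCommGroup F]
  [Module K F] [AddCommGroup G] [Module K G] {x x' : E} {y y' : F} {z z' : G}

lemma tmul_ne_zero (hx : x ≠ 0) (hy : y ≠ 0) : x ⊗ₜ[K] y ≠ 0 := by
  obtain ⟨φ, hφ⟩ := Projective.exists_dual_eq_one K hx
  intro h
  simpa [contractLeftFactor_tmul, hφ, hy] using congrArg (contractLeftFactor φ) h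

lemma exists_smul_eq_of_tmul_eq (h : x' ⊗ₜ[K] y' = x ⊗ₜ[K] y) (hne : x ⊗ₜ[K] y ≠ 0) :
    ∃ c : K, c ≠ 0 ∧ x' = c • x ∧ y' = c⁻¹ • y := by
  have hx' : x' ≠ 0 := by
    rintro rfl
    exact hne (by rw [← h, zero_tmul])
  obtain ⟨φ, hφ⟩ := Projective.exists_dual_eq_one K hx'
  have hy' : y' = φ x • y := by
    simpa [contractLeftFactor_tmul, hφ] using congrArg (contractLeftFactor φ) h
  have hφx : φ x ≠ 0 := by
    intro hφx
    exact hne (by rw [← h, hy', hφx, zero_smul, tmul_zero])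
  have hy : y ≠ 0 := by
    rintro rfl
    exact hne (by rw [tmul_zero])
  refine ⟨(φ x)⁻¹, inv_ne_zero hφx, ?_, by rwa [inv_inv]⟩
  rw [eq_inv_smul_iff₀ hφx, ← sub_eq_zero]
  by_contra hsub
  refine tmul_ne_zero (K := K) hsub hy ?_
  rw [sub_tmul, smul_tmul, ← hy', h, sub_self]

lemma exists_smul_eq_of_tmul_tmul_eq (h : x' ⊗ₜ[K] y' ⊗ₜ[K] z' = x ⊗ₜ[K] y ⊗ₜ[K] z)
    (hne : x ⊗ₜ[K] y ⊗ₜ[K] z ≠ 0) :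
    ∃ l m n : K, (l ≠ 0 ∧ m ≠ 0 ∧ n ≠ 0 ∧ l * m * n = 1) ∧
      x' = l • x ∧ y' = m • y ∧ z' = n • z := by
  obtain ⟨c, hc, hxy, hz⟩ := exists_smul_eq_of_tmul_eq h hne
  have hne' : x ⊗ₜ[K] (c • y) ≠ 0 := by
    rw [tmul_smul]
    exact smul_ne_zero hc fun hxy ↦ hne (by rw [hxy, zero_tmul])
  obtain ⟨d, hd, hx, hy⟩ := exists_smul_eq_of_tmul_eq (hxy.trans (tmul_smul c x y).symm) hne'
  exact ⟨d, d⁻¹ * c, c⁻¹, ⟨hd, mul_ne_zero (inv_ne_zero hd) hc, inv_ne_zero hc, by field_simp⟩,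
    hx, by rw [hy, smul_smul], hz⟩

end Scalars

theorem kruskal_cp_uniqueness_general {K ι ι' E F G : Type*} [Field K] [Fintype ι] [Fintype ι']
    [AddCommGroup E] [Module K E] [AddCommGroup F] [Module K F] [AddCommGroup G] [Module K G]
    (hcard : Fintype.card ι' ≤ Fintype.card ι)
    {x : ι → E} {y : ι → F} {z : ι → G} {x' : ι' → E} {y' : ι' → F} {z' : ι' → G}
    (hne : ∀ r, x r ⊗ₜ[K] y r ⊗ₜ[K] z r ≠ 0)
    (hrank : ∀ Q : Finset ι, 2 ≤ Q.card → 2 * Q.card + 2 ≤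
      Set.finrank K (x '' Q) + Set.finrank K (y '' Q) + Set.finrank K (z '' Q))
    (hdecomp : ∑ r, x' r ⊗ₜ[K] y' r ⊗ₜ[K] z' r = ∑ r, x r ⊗ₜ[K] y r ⊗ₜ[K] z r) :
    ∃ (σ : ι' ≃ ι) (lam mu nu : ι' → K),
      (∀ r, lam r ≠ 0 ∧ mu r ≠ 0 ∧ nu r ≠ 0 ∧ lam r * mu r * nu r = 1) ∧
      (∀ r, x' r = lam r • x (σ r)) ∧ (∀ r, y' r = mu r • y (σ r)) ∧
      (∀ r, z' r = nu r • z (σ r)) := by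
  obtain ⟨σ, hσ⟩ := exists_equiv_of_map_univ_eq <| map_val_eq_of_forall_exists_eq
    (fun _ _ ↦ exists_tmul_eq_of_sum_tmul_eq hne hrank) hcard hdecomp
  choose lam mu nu hscalar hx hy hz using fun r ↦
    exists_smul_eq_of_tmul_tmul_eq (hσ r).symm (hne (σ r))
  exact ⟨σ, lam, mu, nu, hscalar, hx, hy, hz⟩

section CPDecomposition

lemma sum_tmul_col_eq_sum_tmul_col {R m n o ι ι' : Type*} [CommSemiring R] [Finite m] [Finite n]
    [Finite o] [Fintype ι] [Fintype ι'] {X : Matrix m ι R} {Y : Matrix n ι R} {Z : Matrix o ι R}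
    {X' : Matrix m ι' R} {Y' : Matrix n ι' R} {Z' : Matrix o ι' R}
    (h : ∀ i j k, ∑ r, X' i r * Y' j r * Z' k r = ∑ r, X i r * Y j r * Z k r) :
    ∑ r, X'.col r ⊗ₜ[R] Y'.col r ⊗ₜ[R] Z'.col r = ∑ r, X.col r ⊗ₜ[R] Y.col r ⊗ₜ[R] Z.col r := by
  refine (((Pi.basisFun R m).tensorProduct (Pi.basisFun R n)).tensorProduct
    (Pi.basisFun R o)).ext_elem ?_
  rintro ⟨⟨i, j⟩, k⟩
  simpa [Finsupp.finsetSum_apply, mul_comm, mul_left_comm] using h i j k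

variable {d p : ℕ} (M : Matrix (Fin d) (Fin p) ℂ)

lemma kRank_mem : kRank M ∈ {k | k ≤ p ∧ ∀ s : Finset (Fin p), s.card = k →
    LinearIndepOn ℂ M.col s} :=
  Nat.sSup_mem ⟨0, p.zero_le, fun s hs ↦ by simp [Finset.card_eq_zero.1 hs]⟩ ⟨p, fun _ hk ↦ hk.1⟩

lemma kRank_le : kRank M ≤ p := (kRank_mem M).1

lemma linearIndepOn_col_of_card_le_kRank {s : Finset (Fin p)} (hs : s.card ≤ kRank M) :
    LinearIndepOn ℂ M.col s := by
  obtain ⟨t, hst, ht⟩ := Finset.exists_superset_card_eq hs (by simpa using kRank_le M)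
  exact ((kRank_mem M).2 t ht).mono (Finset.coe_subset.2 hst)

lemma col_ne_zero_of_kRank_pos (hM : 0 < kRank M) (r : Fin p) : M.col r ≠ 0 := by
  have hr : LinearIndepOn ℂ M.col ({r} : Finset (Fin p)) :=
    linearIndepOn_col_of_card_le_kRank M hM
  simpa using hr

lemma min_card_kRank_le_finrank (Q : Finset (Fin p)) :
    min Q.card (kRank M) ≤ Set.finrank ℂ (M.col '' Q) := by
  obtain ⟨s, hsQ, hs⟩ := Finset.exists_subset_card_eq (min_le_left Q.card (kRank M))
  rw [← hs, ← finrank_image_eq_card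
    (linearIndepOn_col_of_card_le_kRank M (hs.trans_le (min_le_right _ _)))]
  exact finrank_image_mono M.col hsQ

variable {d₁ d₂ d₃ : ℕ} {X : Matrix (Fin d₁) (Fin p) ℂ} {Y : Matrix (Fin d₂) (Fin p) ℂ}
  {Z : Matrix (Fin d₃) (Fin p) ℂ}

lemma tmul_col_ne_zero_of_le_kRank_add (h : 2 * p + 2 ≤ kRank X + kRank Y + kRank Z) (r : Fin p) :
    X.col r ⊗ₜ[ℂ] Y.col r ⊗ₜ[ℂ] Z.col r ≠ 0 := by
  have hX := kRank_le X
  have hY := kRank_le Y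
  have hZ := kRank_le Z
  exact tmul_ne_zero (tmul_ne_zero (col_ne_zero_of_kRank_pos X (by omega) r)
    (col_ne_zero_of_kRank_pos Y (by omega) r)) (col_ne_zero_of_kRank_pos Z (by omega) r)

lemma two_mul_card_add_two_le_finrank_add (h : 2 * p + 2 ≤ kRank X + kRank Y + kRank Z)
    {Q : Finset (Fin p)} (hQ : 2 ≤ Q.card) : 2 * Q.card + 2 ≤
      Set.finrank ℂ (X.col '' Q) + Set.finrank ℂ (Y.col '' Q) + Set.finrank ℂ (Z.col '' Q) := by
  have hX := kRank_le X
  have hY := kRank_le Y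
  have hZ := kRank_le Z
  have hQp := card_finset_fin_le Q
  have hXQ := min_card_kRank_le_finrank X Q
  have hYQ := min_card_kRank_le_finrank Y Q
  have hZQ := min_card_kRank_le_finrank Z Q
  omega

end CPDecomposition

/-- Kruskal's uniqueness theorem for the CP decomposition of a third-order tensor. -/
theorem kruskal_cp_uniqueness {d₁ d₂ d₃ p : ℕ}
    (X : Matrix (Fin d₁) (Fin p) ℂ) (Y : Matrix (Fin d₂) (Fin p) ℂ)
    (Z : Matrix (Fin d₃) (Fin p) ℂ)
    (X' : Matrix (Fin d₁) (Fin p) ℂ) (Y' : Matrix (Fin d₂) (Fin p) ℂ)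
    (Z' : Matrix (Fin d₃) (Fin p) ℂ)
    (hKruskal : kRank X + kRank Y + kRank Z ≥ 2 * p + 2)
    (hdecomp : ∀ (i : Fin d₁) (j : Fin d₂) (k : Fin d₃),
      ∑ r : Fin p, X' i r * Y' j r * Z' k r = ∑ r : Fin p, X i r * Y j r * Z k r) :
    ∃ (σ : Equiv.Perm (Fin p)) (lam mu nu : Fin p → ℂ),
      (∀ r, lam r ≠ 0 ∧ mu r ≠ 0 ∧ nu r ≠ 0 ∧ lam r * mu r * nu r = 1) ∧
      (∀ r i, X' i r = lam r * X i (σ r)) ∧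
      (∀ r j, Y' j r = mu r * Y j (σ r)) ∧
      (∀ r k, Z' k r = nu r * Z k (σ r)) := by
  obtain ⟨σ, lam, mu, nu, hscalar, hx, hy, hz⟩ := kruskal_cp_uniqueness_general le_rfl
    (tmul_col_ne_zero_of_le_kRank_add hKruskal)
    (fun _ ↦ two_mul_card_add_two_le_finrank_add hKruskal) (sum_tmul_col_eq_sum_tmul_col hdecomp)
  exact ⟨σ, lam, mu, nu, hscalar, fun r ↦ congrFun (hx r), fun r ↦ congrFun (hy r),
    fun r ↦ congrFun (hz r)⟩
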